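/- Let f be a smooth cubic form in four variables over 𝔽₂ whose stabilizer {g ∈ GL₄(𝔽₂) : f ∘ g = f} contains a subgroup isomorphic to the symmetric group S₆. Then f vanishes at every point of 𝔽₂⁴, and there exists g ∈ GL₄(𝔽₂) with f ∘ g = c₀, where c₀ = x²t + y²z + yz² + xt². -/

import Mathlib

open MvPolynomial

noncomputable section

/-- The field with two elements. -/
abbrev F2 : Type := ZMod 2

/-- An algebraic closure of `F2`. -/
abbrev Kbar : Type := AlgebraicClosure F2

/-- Linear substitution action of a matrix `g` on a polynomial `f`:
`(act g f)(x) = f (g * x)`, i.e. the variable `X i` is replaced by `∑ j, g i j • X j`. -/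
def act (g : Matrix (Fin 4) (Fin 4) F2) (f : MvPolynomial (Fin 4) F2) :
    MvPolynomial (Fin 4) F2 :=
  aeval (fun i => ∑ j, g i j • X j) f

lemma act_one (f : MvPolynomial (Fin 4) F2) : act 1 f = f := by
  have h : (fun i => ∑ j, (1 : Matrix (Fin 4) (Fin 4) F2) i j • (X j : MvPolynomial (Fin 4) F2))
      = X := by
    funext i
    simp [Matrix.one_apply, ite_smul]
  simp [act, h]

lemma act_act (g h : Matrix (Fin 4) (Fin 4) F2) (f : MvPolynomial (Fin 4) F2) :
    act g (act h f) = act (h * g) f := by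
  show (aeval _) ((aeval _) f) = _
  rw [← AlgHom.comp_apply, comp_aeval]
  have key : (fun i => (aeval fun i => ∑ j, g i j • (X j : MvPolynomial (Fin 4) F2))
        (∑ j, h i j • (X j : MvPolynomial (Fin 4) F2)))
      = fun i => ∑ j, (h * g) i j • (X j : MvPolynomial (Fin 4) F2) := by
    funext i
    simp only [map_sum, map_smul, aeval_X, Matrix.mul_apply, Finset.smul_sum, smul_smul,
      Finset.sum_smul]
    rw [Finset.sum_comm]
  rw [key]
  rfl

/-- The stabilizer of a polynomial `f` under the linear-substitution action of `GL₄(𝔽₂)`. -/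
def stab (f : MvPolynomial (Fin 4) F2) : Subgroup (GL (Fin 4) F2) where
  carrier := {g | act (g : Matrix (Fin 4) (Fin 4) F2) f = f}
  one_mem' := by simpa using act_one f
  mul_mem' := by
    intro a b ha hb
    simp only [Set.mem_setOf_eq] at *
    have : act ((↑(a * b) : Matrix (Fin 4) (Fin 4) F2)) f = act ↑b (act ↑a f) := by
      rw [act_act]; rfl
    rw [this, ha, hb]
  inv_mem' := by
    intro a ha
    simp only [Set.mem_setOf_eq] at *
    have h2 := congrArg (act ((↑(a⁻¹) : Matrix (Fin 4) (Fin 4) F2))) ha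
    rw [act_act] at h2
    rw [Units.mul_inv, act_one] at h2
    exact h2.symm

/-- A smooth cubic form over `𝔽₂`: homogeneous of degree `3`, such that over an algebraic
closure the only common zero of `f` and its four partial derivatives is the origin. -/
def IsSmoothCubic (f : MvPolynomial (Fin 4) F2) : Prop :=
  f.IsHomogeneous 3 ∧
    ∀ v : Fin 4 → Kbar,
      eval v (map (algebraMap F2 Kbar) f) = 0 →
      (∀ i : Fin 4, eval v (map (algebraMap F2 Kbar) (pderiv i f)) = 0) →
      v = 0

/-- The cubic form `x²t + y²z + yz² + xt²`. -/
def c0 : MvPolynomial (Fin 4) F2 :=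
  X 0 ^ 2 * X 3 + X 1 ^ 2 * X 2 + X 1 * X 2 ^ 2 + X 0 * X 3 ^ 2

/-! ### Part 1: vanishing on rational points -/

lemma eval_act (g : Matrix (Fin 4) (Fin 4) F2) (f : MvPolynomial (Fin 4) F2) (v : Fin 4 → F2) :
    eval v (act g f) = eval (g.mulVec v) f := by
  unfold act
  rw [← MvPolynomial.coe_aeval_eq_eval, ← MvPolynomial.coe_aeval_eq_eval]
  change (aeval v) ((aeval _) f) = (aeval _) f
  rw [← AlgHom.comp_apply, comp_aeval]
  congr 2
  funext i
  simp [Matrix.mulVec, dotProduct]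

/-- Counting fixed points of an element of order dividing `5`. -/
lemma card_mod_five (M : Matrix (Fin 4) (Fin 4) F2) (hM : M ^ 5 = 1)
    (S : Finset (Fin 4 → F2)) (hS : ∀ v ∈ S, M.mulVec v ∈ S) :
    S.card ≡ (S.filter fun v => M.mulVec v = v).card [MOD 5] := by
  classical
  let φ : Function.End S := fun v => ⟨M.mulVec v.1, hS v.1 v.2⟩
  have hpow : ∀ (n : ℕ) (v : S), ((φ ^ n) v).1 = (M ^ n).mulVec v.1 := by
    intro n
    induction n with
    | zero => intro v; rw [pow_zero, pow_zero, Matrix.one_mulVec]; rfl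
    | succ n ih =>
      intro v
      rw [pow_succ, pow_succ, ← Matrix.mulVec_mulVec]
      exact ih (φ v)
  have h1 : φ ^ 5 ^ 1 = 1 := by
    funext v
    apply Subtype.ext
    rw [pow_one, hpow, hM, Matrix.one_mulVec]; rfl
  have : Fact (Nat.Prime 5) := ⟨by norm_num⟩
  have h := Equiv.Perm.card_fixedPoints_modEq (p := 5) (n := 1) h1
  rw [Fintype.card_coe] at h
  convert h using 1
  rw [← Fintype.card_coe]
  refine Fintype.card_congr
    { toFun := fun v => ⟨⟨v.1, (Finset.mem_filter.1 v.2).1⟩,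
        Subtype.ext (Finset.mem_filter.1 v.2).2⟩
      invFun := fun v => ⟨v.1.1, Finset.mem_filter.2 ⟨v.1.2, congrArg Subtype.val v.2⟩⟩
      left_inv := fun _ => rfl
      right_inv := fun _ => rfl }

/-- The number of elements of a subspace of `F2 ^ 4`. -/
lemma card_submodule (W : Submodule F2 (Fin 4 → F2)) (S : Finset (Fin 4 → F2))
    (hS : ∀ v, v ∈ S ↔ v ∈ W) :
    (S.card = 1 ∨ S.card = 2 ∨ S.card = 4 ∨ S.card = 8 ∨ S.card = 16) ∧
      (S.card = 16 → W = ⊤) := by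
  classical
  have hc : S.card = 2 ^ Module.finrank F2 W := by
    have := Module.card_eq_pow_finrank (K := F2) (V := W)
    rw [ZMod.card] at this
    rw [← this, ← Fintype.card_coe]
    exact Fintype.card_congr (Equiv.subtypeEquivRight hS)
  have hle : Module.finrank F2 W ≤ 4 := by
    simpa using Submodule.finrank_le W
  constructor
  · rw [hc]
    interval_cases Module.finrank F2 W <;> simp
  · intro h
    apply Submodule.eq_top_of_finrank_eq
    rw [hc] at h
    have : Module.finrank F2 W = 4 :=
      Nat.pow_right_injective (le_refl 2) (by simpa using h)
    simpa using this

lemma no_fixed (M : Matrix (Fin 4) (Fin 4) F2) (hM : M ^ 5 = 1) (h1 : M ≠ 1)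
    (v : Fin 4 → F2) (hv : M.mulVec v = v) : v = 0 := by
  classical
  let W : Submodule F2 (Fin 4 → F2) := LinearMap.eqLocus (Matrix.mulVecLin M) LinearMap.id
  have hW : ∀ w, w ∈ W ↔ M.mulVec w = w := by
    intro w; simp [W]
  let S : Finset (Fin 4 → F2) := Finset.univ.filter fun v => M.mulVec v = v
  have hc := card_mod_five M hM Finset.univ (fun _ _ => Finset.mem_univ _)
  have hS := card_submodule W S (by intro w; simp [S, hW])
  have hu : (Finset.univ : Finset (Fin 4 → F2)).card = 16 := by
    simp [Finset.card_univ]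
  rw [hu] at hc
  change 16 ≡ S.card [MOD 5] at hc
  have hnot : S.card ≠ 16 := by
    intro h
    have htop := hS.2 h
    apply h1
    apply Matrix.mulVec_injective
    funext w
    rw [Matrix.one_mulVec]
    exact (hW w).1 (htop ▸ Submodule.mem_top)
  have hone : S.card = 1 := by
    rcases hS.1 with h | h | h | h | h
    · exact h
    · rw [h] at hc; exact absurd hc (by decide)
    · rw [h] at hc; exact absurd hc (by decide)
    · rw [h] at hc; exact absurd hc (by decide)
    · exact absurd h hnot
  obtain ⟨w, hw⟩ := Finset.card_eq_one.1 hone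
  have a : v ∈ S := by simp [S, hv]
  have b : (0 : Fin 4 → F2) ∈ S := by simp [S]
  rw [hw, Finset.mem_singleton] at a b
  rw [a, b]

lemma five_dvd (M : Matrix (Fin 4) (Fin 4) F2) (hM : M ^ 5 = 1) (h1 : M ≠ 1)
    (S : Finset (Fin 4 → F2)) (hS : ∀ v ∈ S, M.mulVec v ∈ S) (h0 : (0 : Fin 4 → F2) ∉ S) :
    5 ∣ S.card := by
  have h := card_mod_five M hM S hS
  have he : (S.filter fun v => M.mulVec v = v) = ∅ := by
    apply Finset.filter_eq_empty_iff.2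
    intro v hv hfix
    exact h0 (no_fixed M hM h1 v hfix ▸ hv)
  rw [he] at h
  exact (Nat.modEq_zero_iff_dvd).1 h

/-- A subset of five nonzero vectors cannot be stable under a group of order `720`. -/
lemma no_five (H : Subgroup (GL (Fin 4) F2)) (hH : Nat.card H = 720)
    (M : GL (Fin 4) F2) (hMH : M ∈ H) (hM : M ^ 5 = 1) (h1 : M ≠ 1)
    (T : Finset (Fin 4 → F2)) (h0 : (0 : Fin 4 → F2) ∉ T) (hc : T.card = 5)
    (hT : ∀ g ∈ H, ∀ v ∈ T, (g : Matrix (Fin 4) (Fin 4) F2).mulVec v ∈ T) : False := by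
  classical
  have hM' : (M : Matrix (Fin 4) (Fin 4) F2) ^ 5 = 1 := by
    rw [← Units.val_pow_eq_pow_val, hM]; rfl
  have h1' : (M : Matrix (Fin 4) (Fin 4) F2) ≠ 1 := fun h => h1 (Units.ext h)
  -- the span is everything
  let W := Submodule.span F2 (T : Set (Fin 4 → F2))
  have hWM : ∀ v ∈ W, (M : Matrix (Fin 4) (Fin 4) F2).mulVec v ∈ W := by
    have : W ≤ W.comap (Matrix.mulVecLin (M : Matrix (Fin 4) (Fin 4) F2)) := by
      apply Submodule.span_le.2
      intro v hv
      exact Submodule.subset_span (hT M hMH v hv)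
    exact fun v hv => this hv
  let S : Finset (Fin 4 → F2) := Finset.univ.filter fun v => v ∈ W
  have hS := card_submodule W S (by intro w; simp [S])
  have h0S : (0 : Fin 4 → F2) ∈ S := by simp [S]
  have h5 := five_dvd M hM' h1' (S.erase 0) (by
    intro v hv
    simp only [S, Finset.mem_erase, Finset.mem_filter, Finset.mem_univ, true_and] at hv ⊢
    refine ⟨fun h => hv.1 ?_, hWM v hv.2⟩
    have := congrArg ((M⁻¹ : GL (Fin 4) F2) : Matrix (Fin 4) (Fin 4) F2).mulVec h
    rwa [Matrix.mulVec_mulVec, ← Units.val_mul, inv_mul_cancel, Units.val_one,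
      Matrix.one_mulVec, Matrix.mulVec_zero] at this) (by simp)
  have hsub : T ⊆ S.erase 0 := by
    intro v hv
    refine Finset.mem_erase.2 ⟨fun h => h0 (h ▸ hv), ?_⟩
    simp only [S, Finset.mem_filter, Finset.mem_univ, true_and]
    exact Submodule.subset_span hv
  have hle := Finset.card_le_card hsub
  rw [Finset.card_erase_of_mem h0S] at h5 hle
  have htop : W = ⊤ := hS.2 (by omega)
  -- hence the action on `T` is faithful
  let φ : H → (T ↪ T) := fun g =>
    ⟨fun v => ⟨(g.1 : Matrix (Fin 4) (Fin 4) F2).mulVec v.1, hT g.1 g.2 v.1 v.2⟩, by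
      intro v w hvw
      have h := congrArg (fun u : T =>
        ((g.1⁻¹ : GL (Fin 4) F2) : Matrix (Fin 4) (Fin 4) F2).mulVec u.1) hvw
      simp only [Matrix.mulVec_mulVec, ← Units.val_mul, inv_mul_cancel, Units.val_one,
        Matrix.one_mulVec] at h
      exact Subtype.ext h⟩
  have hφ : Function.Injective φ := by
    intro g h hgh
    apply Subtype.ext
    apply Units.ext
    apply Matrix.mulVec_injective
    funext w
    have hw : w ∈ W := htop ▸ Submodule.mem_top
    have hle : W ≤ LinearMap.eqLocus (Matrix.mulVecLin (g.1 : Matrix (Fin 4) (Fin 4) F2))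
        (Matrix.mulVecLin (h.1 : Matrix (Fin 4) (Fin 4) F2)) := by
      apply Submodule.span_le.2
      intro v hv
      have := congrArg (fun e : T ↪ T => (e ⟨v, hv⟩).1) hgh
      exact this
    exact hle hw
  have hcard := Nat.card_le_card_of_injective φ hφ
  rw [hH, Nat.card_eq_fintype_card (α := T ↪ T), Fintype.card_embedding_eq, Fintype.card_coe,
    hc] at hcard
  exact absurd hcard (by decide)

lemma f2_cases (a : F2) : a = 0 ∨ a = 1 := by
  revert a; decide

lemma vanishing (f : MvPolynomial (Fin 4) F2) (hf : f.IsHomogeneous 3)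
    (H : Subgroup (GL (Fin 4) F2)) (hle : H ≤ stab f) (hH : Nat.card H = 720) :
    ∀ v : Fin 4 → F2, eval v f = 0 := by
  classical
  have : Fact (Nat.Prime 5) := ⟨by norm_num⟩
  obtain ⟨M, hM⟩ := exists_prime_orderOf_dvd_card' (G := H) 5 (by rw [hH]; norm_num)
  have hM5 : (M.1 : GL (Fin 4) F2) ^ 5 = 1 := by
    have := pow_orderOf_eq_one M
    rw [hM] at this
    exact congrArg Subtype.val this
  have hM1 : (M.1 : GL (Fin 4) F2) ≠ 1 := by
    intro h
    have : M = 1 := Subtype.ext h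
    rw [this, orderOf_one] at hM
    exact absurd hM (by norm_num)
  have hM' : (M.1 : Matrix (Fin 4) (Fin 4) F2) ^ 5 = 1 := by
    rw [← Units.val_pow_eq_pow_val, hM5]; rfl
  have h1' : (M.1 : Matrix (Fin 4) (Fin 4) F2) ≠ 1 := fun h => hM1 (Units.ext h)
  have hinv : ∀ g ∈ H, ∀ v, eval ((g : Matrix (Fin 4) (Fin 4) F2).mulVec v) f = eval v f := by
    intro g hg v
    rw [← eval_act]
    exact congrArg (eval v) (hle hg)
  have hf0 : eval (0 : Fin 4 → F2) f = 0 := by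
    rw [MvPolynomial.eval_zero]
    exact hf.coeff_eq_zero (d := 0) (by simp)
  have hf1 : eval (0 : Fin 4 → F2) f ≠ 1 := by rw [hf0]; decide
  let S : Finset (Fin 4 → F2) := Finset.univ.filter fun v => eval v f = 1
  let T : Finset (Fin 4 → F2) := (Finset.univ.filter fun v => eval v f ≠ 1).erase 0
  have h0S : (0 : Fin 4 → F2) ∉ S := by simpa [S] using hf1
  have h5 : 5 ∣ S.card := five_dvd M.1 hM' h1' S (by
    intro v hv
    simp only [S, Finset.mem_filter, Finset.mem_univ, true_and] at hv ⊢
    rw [hinv M.1 M.2, hv]) h0S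
  have hsum : ((S.card : ℕ) : F2) = 0 := by
    have h := MvPolynomial.sum_eval_eq_zero f (by
      have := hf.totalDegree_le
      simp only [ZMod.card, Fintype.card_fin]
      omega)
    rw [← h, Finset.card_filter, Nat.cast_sum]
    apply Finset.sum_congr rfl
    intro v _
    rcases f2_cases (eval v f) with h | h <;> simp [h]
  have h2 : 2 ∣ S.card := (ZMod.natCast_eq_zero_iff _ _).1 hsum
  have hST : S.card + T.card = 15 := by
    have h := Finset.card_filter_add_card_filter_not
      (s := (Finset.univ : Finset (Fin 4 → F2))) (fun v => eval v f = 1)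
    have hu : (Finset.univ : Finset (Fin 4 → F2)).card = 16 := by
      simp [Finset.card_univ]
    have he : T.card = _ := Finset.card_erase_of_mem
      (s := Finset.univ.filter fun v : Fin 4 → F2 => eval v f ≠ 1) (a := 0) (by simpa using hf1)
    have hpos : 0 < (Finset.univ.filter fun v : Fin 4 → F2 => eval v f ≠ 1).card :=
      Finset.card_pos.2 ⟨0, by simpa using hf1⟩
    change S.card + (Finset.univ.filter fun v : Fin 4 → F2 => eval v f ≠ 1).card = _ at h
    omega
  have hT5 : T.card ≠ 5 := by
    intro hc
    refine no_five H hH M.1 M.2 hM5 hM1 T (by simp [T]) hc ?_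
    intro g hg v hv
    simp only [T, Finset.mem_erase, Finset.mem_filter, Finset.mem_univ, true_and] at hv ⊢
    rw [hinv g hg]
    refine ⟨fun h => hv.1 ?_, hv.2⟩
    have := congrArg ((g⁻¹ : GL (Fin 4) F2) : Matrix (Fin 4) (Fin 4) F2).mulVec h
    rwa [Matrix.mulVec_mulVec, ← Units.val_mul, inv_mul_cancel, Units.val_one,
      Matrix.one_mulVec, Matrix.mulVec_zero] at this
  have hS0 : S.card = 0 := by omega
  intro v
  rcases f2_cases (eval v f) with h | h
  · exact h
  · have : v ∈ S := by simp [S, h]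
    rw [Finset.card_eq_zero.1 hS0] at this
    simp at this

/-! ### Part 2: normal form -/

lemma antidiag_four_three : Finset.Nat.antidiagonalTuple 4 3 =
    {![3,0,0,0], ![0,3,0,0], ![0,0,3,0], ![0,0,0,3],
     ![2,1,0,0], ![1,2,0,0], ![2,0,1,0], ![1,0,2,0], ![2,0,0,1], ![1,0,0,2],
     ![0,2,1,0], ![0,1,2,0], ![0,2,0,1], ![0,1,0,2], ![0,0,2,1], ![0,0,1,2],
     ![1,1,1,0], ![1,1,0,1], ![1,0,1,1], ![0,1,1,1]} := by
  decide

lemma expand_cubic (f : MvPolynomial (Fin 4) F2) (hf : f.IsHomogeneous 3) :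
    ∃ c : (Fin 4 → ℕ) → F2, f = ∑ p ∈ Finset.Nat.antidiagonalTuple 4 3,
      C (c p) * ∏ i, X i ^ p i := by
  classical
  refine ⟨fun p => coeff (Finsupp.equivFunOnFinite.symm p) f, ?_⟩
  have hmon : ∀ (p : Fin 4 → ℕ) (a : F2),
      C a * ∏ i, (X i : MvPolynomial (Fin 4) F2) ^ p i
        = monomial (Finsupp.equivFunOnFinite.symm p) a := by
    intro p a
    rw [monomial_eq, Finsupp.prod_fintype _ _ (fun _ => pow_zero _)]
    rfl
  ext m
  rw [coeff_sum]
  simp only [hmon, coeff_monomial]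
  by_cases hm : ∑ i, m i = 3
  · rw [Finset.sum_eq_single (⇑m)]
    · simp
    · intro p _ hp
      rw [if_neg]
      intro h
      apply hp
      rw [← h]; rfl
    · intro h
      exact absurd (Finset.Nat.mem_antidiagonalTuple.2 hm) h
  · rw [hf.coeff_eq_zero (by rwa [← Finsupp.degree_eq_sum] at hm), Finset.sum_eq_zero]
    intro p hp
    rw [if_neg]
    intro h
    apply hm
    rw [← h]
    exact Finset.Nat.mem_antidiagonalTuple.1 hp

/-- The alternating `F2`-bilinear expression `u²v + uv²`. -/
def bb (u v : MvPolynomial (Fin 4) F2) : MvPolynomial (Fin 4) F2 := u ^ 2 * v + u * v ^ 2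

lemma two_eq_zero_poly : (2 : MvPolynomial (Fin 4) F2) = 0 := by
  have : (2 : MvPolynomial (Fin 4) F2) = C 2 := (map_ofNat C 2).symm
  rw [this, show (2 : F2) = 0 from rfl, C_0]

lemma bb_add_left (u w v : MvPolynomial (Fin 4) F2) : bb (u + w) v = bb u v + bb w v := by
  unfold bb; linear_combination (u * w * v) * two_eq_zero_poly

lemma bb_symm (u v : MvPolynomial (Fin 4) F2) : bb u v = bb v u := by
  unfold bb; ring

lemma bb_add_right (u w v : MvPolynomial (Fin 4) F2) : bb v (u + w) = bb v u + bb v w := by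
  rw [bb_symm, bb_add_left, bb_symm u, bb_symm w]

lemma bb_self (u : MvPolynomial (Fin 4) F2) : bb u u = 0 := by
  unfold bb; linear_combination (u ^ 3) * two_eq_zero_poly

lemma bb_smul_left (a : F2) (u v : MvPolynomial (Fin 4) F2) :
    bb (a • u) v = a • bb u v := by
  rcases f2_cases a with rfl | rfl <;> simp [bb]

lemma bb_smul_right (a : F2) (u v : MvPolynomial (Fin 4) F2) :
    bb u (a • v) = a • bb u v := by
  rw [bb_symm, bb_smul_left, bb_symm]

lemma normal_form (f : MvPolynomial (Fin 4) F2) (hf : f.IsHomogeneous 3)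
    (hv : ∀ v : Fin 4 → F2, eval v f = 0) :
    ∃ a b c d e k : F2, f = a • bb (X 0) (X 1) + b • bb (X 0) (X 2) + c • bb (X 0) (X 3)
      + d • bb (X 1) (X 2) + e • bb (X 1) (X 3) + k • bb (X 2) (X 3) := by
  obtain ⟨c, hc⟩ := expand_cubic f hf
  have key : ∀ a b : F2, a + b = 0 → b = a := by decide
  rw [antidiag_four_three] at hc
  repeat rw [Finset.sum_insert (by decide)] at hc
  rw [Finset.sum_singleton] at hc
  simp only [Fin.prod_univ_four, Matrix.cons_val, pow_zero, pow_one, one_mul, mul_one] at hc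
  have e0 := hv ![1,0,0,0]
  have e1 := hv ![0,1,0,0]
  have e2 := hv ![0,0,1,0]
  have e3 := hv ![0,0,0,1]
  have e01 := hv ![1,1,0,0]
  have e02 := hv ![1,0,1,0]
  have e03 := hv ![1,0,0,1]
  have e12 := hv ![0,1,1,0]
  have e13 := hv ![0,1,0,1]
  have e23 := hv ![0,0,1,1]
  have e012 := hv ![1,1,1,0]
  have e013 := hv ![1,1,0,1]
  have e023 := hv ![1,0,1,1]
  have e123 := hv ![0,1,1,1]
  rw [hc] at e0 e1 e2 e3 e01 e02 e03 e12 e13 e23 e012 e013 e023 e123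
  simp only [map_add, map_mul, map_pow, eval_X, eval_C, Matrix.cons_val, one_pow, mul_one,
    mul_zero, zero_mul, add_zero, zero_add, ne_eq, OfNat.ofNat_ne_zero, not_false_eq_true,
    zero_pow] at e0 e1 e2 e3 e01 e02 e03 e12 e13 e23 e012 e013 e023 e123
  simp only [e0, e1, e2, e3, zero_add] at e01 e02 e03 e12 e13 e23 e012 e013 e023 e123
  replace e01 := key _ _ e01
  replace e02 := key _ _ e02
  replace e03 := key _ _ e03
  replace e12 := key _ _ e12
  replace e13 := key _ _ e13
  replace e23 := key _ _ e23
  have kk : ∀ x y z w : F2, x + (x + (y + (y + (z + (z + w))))) = 0 → w = 0 := by decide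
  rw [e01, e02, e12] at e012
  rw [e01, e03, e13] at e013
  rw [e02, e03, e23] at e023
  rw [e12, e13, e23] at e123
  replace e012 := kk _ _ _ _ e012
  replace e013 := kk _ _ _ _ e013
  replace e023 := kk _ _ _ _ e023
  replace e123 := kk _ _ _ _ e123
  refine ⟨c ![2,1,0,0], c ![2,0,1,0], c ![2,0,0,1], c ![0,2,1,0], c ![0,2,0,1], c ![0,0,2,1], ?_⟩
  rw [hc, e0, e1, e2, e3, e01, e02, e03, e12, e13, e23, e012, e013, e023, e123]
  simp only [bb, smul_eq_C_mul, C_0]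
  ring

lemma act_bb (g : Matrix (Fin 4) (Fin 4) F2) (u v : MvPolynomial (Fin 4) F2) :
    act g (bb u v) = bb (act g u) (act g v) := by
  simp [act, bb]

lemma c0_eq : c0 = bb (X 0) (X 3) + bb (X 1) (X 2) := by
  unfold c0 bb; ring

lemma act_c0 (g : Matrix (Fin 4) (Fin 4) F2) :
    act g c0 = bb (∑ j, g 0 j • X j) (∑ j, g 3 j • X j)
      + bb (∑ j, g 1 j • X j) (∑ j, g 2 j • X j) := by
  have hX : ∀ i, act g (X i) = ∑ j, g i j • X j := fun i => by simp [act]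
  have hadd : ∀ u v, act g (u + v) = act g u + act g v := fun u v => by simp [act]
  rw [c0_eq, hadd, act_bb, act_bb, hX, hX, hX, hX]

lemma finish (f : MvPolynomial (Fin 4) F2) (g h : Matrix (Fin 4) (Fin 4) F2)
    (hgh : g * h = 1) (hf : f = act g c0) :
    ∃ g : GL (Fin 4) F2, act (g : Matrix (Fin 4) (Fin 4) F2) f = c0 :=
  ⟨⟨h, g, mul_eq_one_comm.1 hgh, hgh⟩, by
    change act h f = c0
    rw [hf, act_act, hgh, act_one]⟩

lemma degenerate_or : ∀ a b c d e k : F2,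
    (∃ v : Fin 4 → F2, v ≠ 0 ∧ a * v 1 + b * v 2 + c * v 3 = 0 ∧
      a * v 0 + d * v 2 + e * v 3 = 0 ∧ b * v 0 + d * v 1 + k * v 3 = 0 ∧
      c * v 0 + e * v 1 + k * v 2 = 0) ∨
    (a * k + b * e + c * d = 1 ∧ (c = 1 ∨ (a = 1 ∧ k = 1) ∨ (b = 1 ∧ e = 1))) := by
  decide

lemma pderiv_bb (i : Fin 4) (u v : MvPolynomial (Fin 4) F2) :
    pderiv i (bb u v) = u ^ 2 * pderiv i v + v ^ 2 * pderiv i u := by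
  unfold bb
  simp only [map_add, Derivation.leibniz, Derivation.leibniz_pow, smul_eq_mul, nsmul_eq_mul]
  push_cast
  linear_combination (u * v * pderiv i u + u * v * pderiv i v) * two_eq_zero_poly

lemma bb_case (a b d e k c : F2) (hc : c = 1) (hpf : a * k + b * e + c * d = 1)
    (x y z t : MvPolynomial (Fin 4) F2) :
    a • bb x y + b • bb x z + c • bb x t + d • bb y z + e • bb y t + k • bb z t =
      bb (x + e • y + k • z) (t + a • y + b • z) + bb y z := by
  have hd : d = 1 + a * k + b * e := by
    subst hc
    revert a b d e k; decide
  subst hd hc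
  simp only [bb_add_left, bb_add_right, bb_smul_left, bb_smul_right, bb_self, bb_symm z y,
    bb_symm t y, bb_symm y x]
  module

lemma to_c0 (f : MvPolynomial (Fin 4) F2) (a b c d e k : F2)
    (hf : f = a • bb (X 0) (X 1) + b • bb (X 0) (X 2) + c • bb (X 0) (X 3)
      + d • bb (X 1) (X 2) + e • bb (X 1) (X 3) + k • bb (X 2) (X 3))
    (hpf : a * k + b * e + c * d = 1) (h : c = 1 ∨ (a = 1 ∧ k = 1) ∨ (b = 1 ∧ e = 1)) :
    ∃ g : GL (Fin 4) F2, act (g : Matrix (Fin 4) (Fin 4) F2) f = c0 := by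
  rcases h with h | ⟨h, -⟩ | ⟨h, -⟩
  · refine finish f !![1,e,k,0;0,1,0,0;0,0,1,0;0,a,b,1] !![1,e,k,0;0,1,0,0;0,0,1,0;0,a,b,1] ?_ ?_
    · clear hf; revert a b c d e k; decide
    · rw [act_c0, hf, bb_case a b d e k c h hpf]
      simp [Fin.sum_univ_four]
      congr 1 <;> module
  · -- exchange the roles of `X 1` and `X 3`
    have h2 : f = c • bb (X 0) (X 3) + b • bb (X 0) (X 2) + a • bb (X 0) (X 1)
      + k • bb (X 3) (X 2) + e • bb (X 3) (X 1) + d • bb (X 2) (X 1) := by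
      rw [hf, bb_symm (X 3) (X 2), bb_symm (X 3) (X 1), bb_symm (X 2) (X 1)]; ring
    rw [bb_case c b k e d a h (by rw [← hpf]; ring)] at h2
    refine finish f !![1,0,d,e;0,0,0,1;0,0,1,0;0,1,b,c] !![1,e,d,0;0,c,b,1;0,0,1,0;0,1,0,0] ?_ ?_
    · clear hf h2; revert a b c d e k; decide
    · rw [act_c0, h2]
      simp [Fin.sum_univ_four]
      congr 1 <;> module
  · -- exchange the roles of `X 2` and `X 3`
    have h2 : f = a • bb (X 0) (X 1) + c • bb (X 0) (X 3) + b • bb (X 0) (X 2)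
      + e • bb (X 1) (X 3) + d • bb (X 1) (X 2) + k • bb (X 3) (X 2) := by
      rw [hf, bb_symm (X 3) (X 2)]; ring
    rw [bb_case a c e d k b h (by rw [← hpf]; ring)] at h2
    refine finish f !![1,d,0,k;0,1,0,0;0,0,0,1;0,a,1,c] !![1,d,k,0;0,1,0,0;0,a,c,1;0,0,1,0] ?_ ?_
    · clear hf h2; revert a b c d e k; decide
    · rw [act_c0, h2]
      simp [Fin.sum_univ_four]
      congr 1 <;> module

lemma eval_map_coe (p : MvPolynomial (Fin 4) F2) (v : Fin 4 → F2) :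
    eval (fun i => algebraMap F2 Kbar (v i)) (map (algebraMap F2 Kbar) p)
      = algebraMap F2 Kbar (eval v p) := by
  rw [eval_map, ← eval₂_id, eval₂_comp_left, RingHom.comp_id]; rfl

lemma not_degenerate (f : MvPolynomial (Fin 4) F2) (hs : IsSmoothCubic f)
    (hv0 : ∀ v : Fin 4 → F2, eval v f = 0) (a b c d e k : F2)
    (hf : f = a • bb (X 0) (X 1) + b • bb (X 0) (X 2) + c • bb (X 0) (X 3)
      + d • bb (X 1) (X 2) + e • bb (X 1) (X 3) + k • bb (X 2) (X 3))
    (v : Fin 4 → F2) (h0 : a * v 1 + b * v 2 + c * v 3 = 0)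
    (h1 : a * v 0 + d * v 2 + e * v 3 = 0) (h2 : b * v 0 + d * v 1 + k * v 3 = 0)
    (h3 : c * v 0 + e * v 1 + k * v 2 = 0) : v = 0 := by
  have hsq : ∀ x : F2, x ^ 2 = x := by decide
  have h := hs.2 (fun i => algebraMap F2 Kbar (v i)) (by rw [eval_map_coe, hv0, map_zero]) (by
    intro i
    rw [eval_map_coe]
    suffices hh : eval v (pderiv i f) = 0 by rw [hh, map_zero]
    rw [hf]
    simp only [map_add, Derivation.map_smul, pderiv_bb, smul_eval, map_mul, map_pow, eval_X,
      pderiv_X, hsq]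
    fin_cases i
    · simpa [Pi.single_apply] using h0
    · simpa [Pi.single_apply] using h1
    · simpa [Pi.single_apply] using h2
    · simpa [Pi.single_apply] using h3)
  funext i
  have hi := congrFun h i
  exact (algebraMap F2 Kbar).injective (by simpa using hi)

/-- if the stabilizer of a smooth cubic form `f` over `𝔽₂` contains a subgroup
isomorphic to `S₆`, then `f` vanishes at every point of `𝔽₂⁴` and is `GL₄(𝔽₂)`-equivalent
to `c₀`. -/
theorem S6_action_implies_vanishing (f : MvPolynomial (Fin 4) F2)
    (hf : IsSmoothCubic f)
    (hS6 : ∃ H : Subgroup (GL (Fin 4) F2), H ≤ stab f ∧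
      Nonempty (H ≃* Equiv.Perm (Fin 6))) :
    (∀ v : Fin 4 → F2, eval v f = 0) ∧
    ∃ g : GL (Fin 4) F2, act (g : Matrix (Fin 4) (Fin 4) F2) f = c0 := by
  obtain ⟨H, hle, ⟨φ⟩⟩ := hS6
  have hH : Nat.card H = 720 := by
    rw [Nat.card_congr φ.toEquiv, Nat.card_perm, Nat.card_eq_fintype_card, Fintype.card_fin]
    rfl
  have hv := vanishing f hf.1 H hle hH
  refine ⟨hv, ?_⟩
  obtain ⟨a, b, c, d, e, k, hfe⟩ := normal_form f hf.1 hv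
  rcases degenerate_or a b c d e k with ⟨v, hne, h0, h1, h2, h3⟩ | ⟨hpf, h⟩
  · exact absurd (not_degenerate f hf hv a b c d e k hfe v h0 h1 h2 h3) hne
  · exact to_c0 f a b c d e k hfe hpf h
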